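/- arXiv:0806.1963 — 2 statements merged into one kernel-verified Lean document; each statement's English description precedes it below -/
import Mathlib

section
/- (Lemma 6.1.2) Let d ≥ 1 be an integer, p ∈ [2,∞), θ ∈ (d−1, d−1+p), γ = θ−d−p+1, and β, ε ∈ (0,∞). Then there exists a constant N = N(d,p,θ,ε) such that for every bounded measurable function ā = (ā¹,…,ā^d) : ℝ^d_+ → ℝ^d satisfying |ā(x) − ā(y)| ≤ β whenever x, y ∈ ℝ^d_+ and |x − y| ≤ ε(x¹ ∧ y¹), and every u ∈ C_c^∞(ℝ^d_+), one has | ∫_{ℝ^d_+} (x¹)^γ |u|^{p−2} u ā^i D_i u dx + p^{−1} γ ∫_{ℝ^d_+} ā¹ (x¹)^{γ−1} |u|^p dx | ≤ N β (‖M^{−1}u‖_{L_{p,θ}} + ‖Du‖_{L_{p,θ}})^p. -/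
open MeasureTheory Finset

/-- The weighted norm `‖f‖_{L_{p,θ}} = (∫_{ℝ^d_+} (x¹)^{θ-d} |f(x)|^p dx)^{1/p}`
on the half space `ℝ^d_+ = {x : x¹ > 0}`. -/
noncomputable def wnorm (d : ℕ) [NeZero d] (p θ : ℝ)
    (f : EuclideanSpace ℝ (Fin d) → ℝ) : ℝ :=
  (∫ x in {x : EuclideanSpace ℝ (Fin d) | 0 < x 0},
      (x 0) ^ (θ - d) * |f x| ^ p) ^ (1 / p)


lemma flow_est {E : Type*} [MeasurableSpace E] (μ : Measure E) [SFinite μ]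
    (T : ℝ → E → E) (hTm : Measurable (fun z : ℝ × E => T z.1 z.2))
    (hT0 : ∀ x, T 0 x = x) (hTinv : ∀ s x, T (-s) (T s x) = x) (κ : ℝ)
    (hmap : ∀ s, μ.map (T s) = ENNReal.ofReal (Real.exp (-κ * s)) • μ)
    (b g X : E → ℝ) (hb : Measurable b) (C : ℝ) (hbC : ∀ x, |b x| ≤ C)
    (hgm : Measurable g) (hXm : Measurable X) (hgi : Integrable g μ) (hXi : Integrable X μ)
    (hder : ∀ x s, HasDerivAt (fun s => g (T s x)) (X (T s x)) s)
    (hcont : ∀ x, Continuous fun s => X (T s x)) (S : ℝ) (hS : 0 < S) (β : ℝ)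
    (hosc : ∀ s ∈ Set.Icc 0 S, ∀ᵐ x ∂μ, |b x - b (T s x)| ≤ β) :
    |(∫ x, b x * X x ∂μ) + κ * ∫ x, b x * g x ∂μ| ≤
      β * ((∫ x, |X x| ∂μ) +
        Real.exp (κ * S) / (∫ s in (0:ℝ)..S, Real.exp (κ * s)) * ∫ x, |g x| ∂μ) := by
  have hTs : ∀ s, Measurable (T s) := fun s => hTm.comp (measurable_const.prodMk measurable_id)
  have hmapi : ∀ s (f : E → ℝ), Measurable f →
      ∫ x, f (T s x) ∂μ = Real.exp (-κ * s) * ∫ x, f x ∂μ := by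
    intro s f hf
    rw [← integral_map (hTs s).aemeasurable hf.aestronglyMeasurable, hmap,
      integral_smul_measure, ENNReal.toReal_ofReal (Real.exp_pos _).le, smul_eq_mul]
  have hcompi : ∀ s (f : E → ℝ), Measurable f → Integrable f μ →
      Integrable (fun x => f (T s x)) μ := by
    intro s f hf hi
    have : Integrable f (μ.map (T s)) := by
      rw [hmap]; exact hi.smul_measure ENNReal.ofReal_ne_top
    exact this.comp_measurable (hTs s)
  have hbmul : ∀ (b : E → ℝ) (f : E → ℝ), Measurable b → (∀ x, |b x| ≤ C) → Integrable f μ →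
      Integrable (fun x => b x * f x) μ := by
    intro b f hb hbC hf
    exact hf.bdd_mul hb.aestronglyMeasurable (Filter.Eventually.of_forall hbC)
  have hosc_int : ∀ s ∈ Set.Icc 0 S, ∀ f : E → ℝ, Integrable f μ →
      |(∫ x, b x * f x ∂μ) - ∫ x, b (T s x) * f x ∂μ| ≤ β * ∫ x, |f x| ∂μ := by
    intro s hs f hf
    rw [← integral_sub (hbmul b f hb hbC hf)
      (hbmul (fun x => b (T s x)) f (hb.comp (hTs s)) (fun x => hbC _) hf), ← integral_const_mul]
    rw [← Real.norm_eq_abs]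
    refine norm_integral_le_of_norm_le (hf.abs.const_mul β) ?_
    filter_upwards [hosc s hs] with x hx
    rw [← sub_mul, norm_mul, Real.norm_eq_abs, Real.norm_eq_abs]
    exact mul_le_mul_of_nonneg_right hx (abs_nonneg _)
  have hswap : ∀ s (f : E → ℝ), Measurable f →
      Real.exp (κ * s) * ∫ x, b (T s x) * f x ∂μ = ∫ x, b x * f (T (-s) x) ∂μ := by
    intro s f hf
    have := hmapi s (fun x => b x * f (T (-s) x)) (hb.mul (hf.comp (hTs (-s))))
    simp only [hTinv] at this
    rw [this, ← mul_assoc, ← Real.exp_add]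
    simp
  set c := ∫ s in (0:ℝ)..S, Real.exp (κ * s) with hc
  have hcpos : 0 < c :=
    intervalIntegral.intervalIntegral_pos_of_pos (Continuous.intervalIntegrable (by fun_prop) _ _)
      (fun s => Real.exp_pos _) hS
  have hcκ : c * κ = Real.exp (κ * S) - 1 := by
    rw [hc, ← intervalIntegral.integral_mul_const]
    rw [intervalIntegral.integral_eq_sub_of_hasDerivAt (f := fun s => Real.exp (κ * s))]
    · simp
    · intro s _
      have := ((hasDerivAt_id s).const_mul κ).exp
      simpa using this
    · exact Continuous.intervalIntegrable (by fun_prop) _ _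
  -- product integrability
  have hmeas2 : Measurable (fun z : ℝ × E => b z.2 * X (T (-z.1) z.2)) := by
    refine (hb.comp measurable_snd).mul (hXm.comp ?_)
    exact hTm.comp ((measurable_fst.neg).prodMk measurable_snd)
  have hprod : Integrable (fun z : ℝ × E => b z.2 * X (T (-z.1) z.2))
      ((volume.restrict (Set.uIoc 0 S)).prod μ) := by
    rw [integrable_prod_iff hmeas2.aestronglyMeasurable]
    constructor
    · exact Filter.Eventually.of_forall fun s =>
        hbmul b _ hb hbC (hcompi (-s) X hXm hXi)
    · have hdom : Integrable (fun s => C * (Real.exp (κ * s) * ∫ x, |X x| ∂μ))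
          (volume.restrict (Set.uIoc 0 S)) := by
        have : IntervalIntegrable (fun s => C * (Real.exp (κ * s) * ∫ x, |X x| ∂μ)) volume 0 S :=
          Continuous.intervalIntegrable (by fun_prop) _ _
        exact this.def'
      refine hdom.mono' ?_ (Filter.Eventually.of_forall fun s => ?_)
      · exact (hmeas2.norm.stronglyMeasurable.integral_prod_right).aestronglyMeasurable
      · simp only
        rw [Real.norm_eq_abs, abs_of_nonneg (integral_nonneg fun x => norm_nonneg _)]
        have h1 := hmapi (-s) (fun x => |X x|) (hXm.abs)
        have h2 : Real.exp (κ * s) = Real.exp (-κ * -s) := by congr 1; ring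
        rw [h2, ← h1, ← integral_const_mul]
        refine integral_mono (hbmul b _ hb hbC (hcompi (-s) X hXm hXi)).norm
          ((hcompi (-s) X hXm hXi).abs.const_mul C) fun x => ?_
        simp only [norm_mul, Real.norm_eq_abs]
        exact mul_le_mul_of_nonneg_right (hbC x) (abs_nonneg _)
  have hFTC : ∀ x, ∫ s in (0:ℝ)..S, X (T (-s) x) = g x - g (T (-S) x) := by
    intro x
    rw [intervalIntegral.integral_comp_neg (fun s => X (T s x)),
      intervalIntegral.integral_eq_sub_of_hasDerivAt (f := fun s => g (T s x))
      (fun s _ => hder x s) ((hcont x).intervalIntegrable _ _)]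
    simp [hT0]
  have hJ : ∫ s in (0:ℝ)..S, Real.exp (κ * s) * ∫ x, b (T s x) * X x ∂μ =
      (∫ x, b x * g x ∂μ) - Real.exp (κ * S) * ∫ x, b (T S x) * g x ∂μ := by
    simp_rw [hswap _ X hXm]
    rw [hswap S g hgm, ← integral_sub (hbmul b g hb hbC hgi)
      (hbmul b _ hb hbC (hcompi (-S) g hgm hgi))]
    rw [intervalIntegral_integral_swap hprod]
    refine integral_congr_ae (Filter.Eventually.of_forall fun x => ?_)
    simp only
    rw [intervalIntegral.integral_const_mul, hFTC]
    ring
  have hJi : IntervalIntegrable (fun s => Real.exp (κ * s) * ∫ x, b (T s x) * X x ∂μ)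
      volume 0 S := by
    rw [intervalIntegrable_iff]
    simp_rw [hswap _ X hXm]
    exact hprod.integral_prod_left
  have hd : |c * (∫ x, b x * X x ∂μ) -
      ∫ s in (0:ℝ)..S, Real.exp (κ * s) * ∫ x, b (T s x) * X x ∂μ| ≤
      c * (β * ∫ x, |X x| ∂μ) := by
    rw [hc, ← intervalIntegral.integral_mul_const, ← intervalIntegral.integral_mul_const,
      ← intervalIntegral.integral_sub (Continuous.intervalIntegrable (by fun_prop) _ _) hJi,
      ← Real.norm_eq_abs]
    refine intervalIntegral.norm_integral_le_of_norm_le hS.le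
      (Filter.Eventually.of_forall fun s hs => ?_)
      (Continuous.intervalIntegrable (by fun_prop) _ _)
    rw [← mul_sub, norm_mul, Real.norm_eq_abs, Real.norm_eq_abs, abs_of_pos (Real.exp_pos _)]
    exact mul_le_mul_of_nonneg_left (hosc_int s ⟨hs.1.le, hs.2⟩ X hXi) (Real.exp_pos _).le
  have hQ := hosc_int S ⟨hS.le, le_rfl⟩ g hgi
  rw [hJ] at hd
  set P := ∫ x, b x * X x ∂μ
  set Q := ∫ x, b x * g x ∂μ
  set QS := ∫ x, b (T S x) * g x ∂μ
  set IX := ∫ x, |X x| ∂μ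
  set Ig := ∫ x, |g x| ∂μ
  have key : c * (P + κ * Q) = (c * P - (Q - Real.exp (κ * S) * QS)) +
      Real.exp (κ * S) * (Q - QS) := by
    linear_combination Q * hcκ
  have h1 : c * |P + κ * Q| ≤ c * (β * IX) + Real.exp (κ * S) * (β * Ig) := by
    rw [← abs_of_pos hcpos, ← abs_mul, abs_of_pos hcpos, key]
    refine (abs_add_le _ _).trans (add_le_add hd ?_)
    rw [abs_mul, abs_of_pos (Real.exp_pos _)]
    exact mul_le_mul_of_nonneg_left hQ (Real.exp_pos _).le
  rw [← mul_le_mul_iff_right₀ hcpos]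
  refine h1.trans (le_of_eq ?_)
  field_simp

noncomputable def flowE {d : ℕ} [NeZero d] (i : Fin d) : ℝ := if i = 0 then 1 else 0

noncomputable def flowH {d : ℕ} [NeZero d] (i : Fin d) (s : ℝ) : ℝ :=
  if i = 0 then Real.exp s - 1 else s

noncomputable def flowT {d : ℕ} [NeZero d] (i : Fin d) (s : ℝ) (x : EuclideanSpace ℝ (Fin d)) :
    EuclideanSpace ℝ (Fin d) :=
  x + (flowH i s * x 0) • EuclideanSpace.single i (1:ℝ)

lemma flowH_deriv {d : ℕ} [NeZero d] (i : Fin d) (s : ℝ) :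
    HasDerivAt (flowH i) (Real.exp (flowE i * s)) s := by
  unfold flowE
  by_cases hi : i = 0
  · have : flowH i = fun s => Real.exp s - 1 := by funext s; simp [flowH, hi]
    rw [this]
    simpa [hi] using (Real.hasDerivAt_exp s).sub_const 1
  · have : flowH i = fun s => s := by funext s; simp [flowH, hi]
    rw [this]
    simp only [hi, if_false, zero_mul, Real.exp_zero]
    exact hasDerivAt_id' s

lemma flowH_cont {d : ℕ} [NeZero d] (i : Fin d) : Continuous (flowH i) :=
  continuous_iff_continuousAt.2 fun s => (flowH_deriv i s).continuousAt

lemma flowT_zero {d : ℕ} [NeZero d] (i : Fin d) (s : ℝ) (x : EuclideanSpace ℝ (Fin d)) :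
    (flowT i s x) 0 = Real.exp (flowE i * s) * x 0 := by
  unfold flowT flowE flowH
  by_cases hi : i = 0
  · simp [hi]; ring
  · simp [hi, Ne.symm hi]

lemma flowT_inv {d : ℕ} [NeZero d] (i : Fin d) (s : ℝ) (x : EuclideanSpace ℝ (Fin d)) :
    flowT i (-s) (flowT i s x) = x := by
  have h : flowH i s + flowH i (-s) * Real.exp (flowE i * s) = 0 := by
    unfold flowH flowE
    by_cases hi : i = 0
    · simp [hi, sub_mul, ← Real.exp_add]
    · simp [hi]
  rw [flowT, flowT_zero, flowT, add_assoc, ← add_smul]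
  have : flowH i s * x 0 + flowH i (-s) * (Real.exp (flowE i * s) * x 0) = 0 := by
    linear_combination x 0 * h
  rw [this]; simp

lemma flowT_id {d : ℕ} [NeZero d] (i : Fin d) (x : EuclideanSpace ℝ (Fin d)) :
    flowT i 0 x = x := by
  simp [flowT, flowH]

lemma flowT_cont {d : ℕ} [NeZero d] (i : Fin d) :
    Continuous (fun z : ℝ × EuclideanSpace ℝ (Fin d) => flowT i z.1 z.2) := by
  unfold flowT
  have := flowH_cont i
  fun_prop

lemma flowT_deriv {d : ℕ} [NeZero d] (i : Fin d) (s : ℝ) (x : EuclideanSpace ℝ (Fin d)) :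
    HasDerivAt (fun s => flowT i s x) ((flowT i s x) 0 • EuclideanSpace.single i (1:ℝ)) s := by
  rw [flowT_zero]
  exact (((flowH_deriv i s).mul_const (x 0)).smul_const _).const_add x

lemma flowT_map {d : ℕ} [NeZero d] (i : Fin d) (s : ℝ) :
    (volume : Measure (EuclideanSpace ℝ (Fin d))).map (flowT i s) =
      ENNReal.ofReal (Real.exp (-(flowE i * s))) • volume := by
  let f : EuclideanSpace ℝ (Fin d) →ₗ[ℝ] ℝ :=
    flowH i s • (EuclideanSpace.proj (0 : Fin d) : EuclideanSpace ℝ (Fin d) →L[ℝ] ℝ).toLinearMap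
  have hT : flowT i s = LinearMap.transvection f (EuclideanSpace.single i (1:ℝ)) := by
    funext x
    simp [flowT, f, LinearMap.transvection.apply]
  have hdet : LinearMap.det (LinearMap.transvection f (EuclideanSpace.single i (1:ℝ))) =
      Real.exp (flowE i * s) := by
    rw [LinearMap.transvection.det]
    by_cases hi : i = 0
    · simp [f, flowH, flowE, hi]
    · simp [f, flowH, flowE, hi, Ne.symm hi]
  rw [hT, Measure.map_linearMap_addHaar_eq_smul_addHaar, hdet, Real.exp_neg,
    abs_of_pos (inv_pos.2 (Real.exp_pos _))]
  rw [hdet]; exact (Real.exp_pos _).ne'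

lemma flowT_dist {d : ℕ} [NeZero d] (i : Fin d) (ε s : ℝ) (hε : 0 < ε) (hs0 : 0 ≤ s)
    (hs : s ≤ Real.log (1 + ε)) (x : EuclideanSpace ℝ (Fin d)) (hx : 0 < x 0) :
    dist x (flowT i s x) ≤ ε * min (x 0) ((flowT i s x) 0) := by
  have h1 : Real.exp s ≤ 1 + ε := by
    rwa [← Real.le_log_iff_exp_le (by linarith)]
  have h2 : s + 1 ≤ Real.exp s := Real.add_one_le_exp s
  have hH : 0 ≤ flowH i s ∧ flowH i s ≤ ε := by
    unfold flowH
    split_ifs <;> constructor <;> linarith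
  have hmin : min (x 0) ((flowT i s x) 0) = x 0 := by
    rw [flowT_zero]
    apply min_eq_left
    have : 1 ≤ Real.exp (flowE i * s) := by
      apply Real.one_le_exp
      unfold flowE
      split_ifs <;> simp [hs0]
    nlinarith
  rw [hmin, flowT, dist_self_add_right, norm_smul]
  have hn : ‖EuclideanSpace.single i (1:ℝ)‖ = 1 := by simp
  simp only [hn, mul_one, norm_mul, Real.norm_eq_abs, abs_of_pos hx,
    abs_of_nonneg hH.1]
  exact mul_le_mul_of_nonneg_right hH.2 hx.le

noncomputable def wmeas (d : ℕ) [NeZero d] (γ : ℝ) : Measure (EuclideanSpace ℝ (Fin d)) :=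
  (volume.restrict {x : EuclideanSpace ℝ (Fin d) | 0 < x 0}).withDensity
    (fun x => ENNReal.ofReal ((x 0) ^ (γ - 1)))

instance (d : ℕ) [NeZero d] (γ : ℝ) : SFinite (wmeas d γ) := by
  unfold wmeas; infer_instance

lemma measH (d : ℕ) [NeZero d] :
    MeasurableSet {x : EuclideanSpace ℝ (Fin d) | 0 < x 0} :=
  (isOpen_lt continuous_const (by fun_prop)).measurableSet

lemma measw (d : ℕ) [NeZero d] (r : ℝ) :
    Measurable (fun x : EuclideanSpace ℝ (Fin d) => (x 0) ^ r) := by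
  have : Measurable (fun x : EuclideanSpace ℝ (Fin d) => x 0) :=
    Continuous.measurable (by fun_prop)
  exact this.pow_const r

lemma wmeas_map {d : ℕ} [NeZero d] (γ : ℝ) (i : Fin d) (s : ℝ) :
    (wmeas d γ).map (flowT i s) =
      ENNReal.ofReal (Real.exp (-(flowE i * γ) * s)) • wmeas d γ := by
  have hTm : Measurable (flowT i s) :=
    ((flowT_cont i).comp (Continuous.prodMk_right s)).measurable
  ext A hA
  set H := {x : EuclideanSpace ℝ (Fin d) | 0 < x 0} with hH
  set F : EuclideanSpace ℝ (Fin d) → ENNReal :=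
    (H ∩ A).indicator (fun x => ENNReal.ofReal ((x 0) ^ (γ - 1))) with hF
  have hFm : Measurable F :=
    Measurable.indicator (measw d _).ennreal_ofReal ((measH d).inter hA)
  have hval : ∀ B, MeasurableSet B → wmeas d γ B =
      ∫⁻ x, (H ∩ B).indicator (fun x => ENNReal.ofReal ((x 0) ^ (γ - 1))) x := by
    intro B hB
    rw [wmeas, withDensity_apply _ hB, Measure.restrict_restrict hB, Set.inter_comm,
      lintegral_indicator ((measH d).inter hB)]
  rw [Measure.map_apply hTm hA, Measure.smul_apply, hval _ (hTm hA), hval _ hA]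
  have hpt : ∀ x, (H ∩ flowT i s ⁻¹' A).indicator
      (fun x => ENNReal.ofReal ((x 0) ^ (γ - 1))) x =
      ENNReal.ofReal (Real.exp (-(flowE i * s * (γ - 1)))) * F (flowT i s x) := by
    intro x
    have hmem : x ∈ H ↔ flowT i s x ∈ H := by
      simp only [hH, Set.mem_ofPred_eq, flowT_zero]
      exact (mul_pos_iff_of_pos_left (Real.exp_pos _)).symm
    by_cases hx : x ∈ H ∩ flowT i s ⁻¹' A
    · have hx' : flowT i s x ∈ H ∩ A := ⟨hmem.1 hx.1, hx.2⟩
      have hx0 : 0 < x 0 := hx.1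
      rw [hF, Set.indicator_of_mem hx, Set.indicator_of_mem hx',
        ← ENNReal.ofReal_mul (Real.exp_pos _).le, flowT_zero,
        Real.mul_rpow (Real.exp_pos _).le hx0.le, ← Real.exp_mul, ← mul_assoc, ← Real.exp_add]
      simp
    · have hx' : flowT i s x ∉ H ∩ A := fun h => hx ⟨hmem.2 h.1, h.2⟩
      rw [hF, Set.indicator_of_notMem hx, Set.indicator_of_notMem hx', mul_zero]
  simp_rw [hpt]
  rw [lintegral_const_mul _ (show Measurable (fun x => F (flowT i s x)) from hFm.comp hTm), ← lintegral_map hFm hTm, flowT_map,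
    lintegral_smul_measure, smul_eq_mul, smul_eq_mul, ← mul_assoc,
    ← ENNReal.ofReal_mul (Real.exp_pos _).le, ← Real.exp_add]
  congr 4
  ring

lemma wmeas_integral {d : ℕ} [NeZero d] (γ : ℝ) (f : EuclideanSpace ℝ (Fin d) → ℝ) :
    ∫ x, f x ∂(wmeas d γ) =
      ∫ x in {x : EuclideanSpace ℝ (Fin d) | 0 < x 0}, (x 0) ^ (γ - 1) * f x := by
  rw [wmeas, integral_withDensity_eq_integral_toReal_smul (measw d _).ennreal_ofReal
    (Filter.Eventually.of_forall fun x => ENNReal.ofReal_lt_top)]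
  refine setIntegral_congr_fun (measH d) fun x hx => ?_
  have hx0 : 0 < x 0 := hx
  simp only [ENNReal.toReal_ofReal (Real.rpow_nonneg hx0.le _), smul_eq_mul]

lemma wmeas_integrable {d : ℕ} [NeZero d] (γ : ℝ) (f : EuclideanSpace ℝ (Fin d) → ℝ)
    (hf : Integrable (fun x => (x 0) ^ (γ - 1) * f x)) : Integrable f (wmeas d γ) := by
  rw [wmeas, integrable_withDensity_iff_integrable_smul' (measw d _).ennreal_ofReal
    (Filter.Eventually.of_forall fun x => ENNReal.ofReal_lt_top)]
  have : IntegrableOn (fun x => (x 0) ^ (γ - 1) * f x)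
    {x : EuclideanSpace ℝ (Fin d) | 0 < x 0} := hf.integrableOn
  refine this.congr_fun (fun x hx => ?_) (measH d)
  have hx0 : 0 < x 0 := hx
  simp only [ENNReal.toReal_ofReal (Real.rpow_nonneg hx0.le _), smul_eq_mul]

lemma supp_integrable {d : ℕ} [NeZero d] (r : ℝ) (u v : EuclideanSpace ℝ (Fin d) → ℝ)
    (hu : HasCompactSupport u) (hus : tsupport u ⊆ {x | 0 < x 0})
    (hv : Continuous v) (hvu : ∀ x, x ∉ tsupport u → v x = 0) :
    Integrable (fun x => (x 0) ^ r * v x) := by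
  have hts : tsupport (fun x : EuclideanSpace ℝ (Fin d) => (x 0) ^ r * v x) ⊆ tsupport u := by
    refine closure_minimal (fun x hx => ?_) (isClosed_tsupport u)
    by_contra h
    exact hx (by simp [hvu x h])
  refine Continuous.integrable_of_hasCompactSupport ?_
    (hu.of_isClosed_subset (isClosed_tsupport _) hts)
  refine continuous_of_tsupport fun x hx => ?_
  have hx0 : 0 < x 0 := hus (hts hx)
  have h0 : ContinuousAt (fun x : EuclideanSpace ℝ (Fin d) => x 0) x :=
    Continuous.continuousAt (by fun_prop)
  exact (h0.rpow_const (Or.inl hx0.ne')).mul hv.continuousAt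

noncomputable def flowX {d : ℕ} [NeZero d] (p : ℝ) (u : EuclideanSpace ℝ (Fin d) → ℝ) (i : Fin d)
    (x : EuclideanSpace ℝ (Fin d)) : ℝ :=
  x 0 * (p * |u x| ^ (p - 2) * u x * fderiv ℝ u x (EuclideanSpace.single i 1))

noncomputable def flowK {d : ℕ} [NeZero d] (γ ε : ℝ) (i : Fin d) : ℝ :=
  Real.exp (flowE i * γ * Real.log (1 + ε)) /
    ∫ s in (0:ℝ)..Real.log (1 + ε), Real.exp (flowE i * γ * s)

lemma flowK_nonneg {d : ℕ} [NeZero d] (γ ε : ℝ) (hε : 0 < ε) (i : Fin d) : 0 ≤ flowK γ ε i := by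
  refine div_nonneg (Real.exp_pos _).le ?_
  exact intervalIntegral.integral_nonneg (Real.log_nonneg (by linarith))
    fun s _ => (Real.exp_pos _).le

lemma flowX_cont {d : ℕ} [NeZero d] (p : ℝ) (hp : 2 ≤ p) (u : EuclideanSpace ℝ (Fin d) → ℝ)
    (hu : ContDiff ℝ (⊤ : ℕ∞) u) (i : Fin d) : Continuous (flowX p u i) := by
  have h1 : Continuous u := hu.continuous
  have h2 : Continuous (fderiv ℝ u) := hu.continuous_fderiv (by simp)
  have h3 : Continuous fun x => |u x| ^ (p - 2) :=
    h1.abs.rpow_const fun x => Or.inr (by linarith)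
  unfold flowX
  fun_prop

lemma g_cont {d : ℕ} [NeZero d] (p : ℝ) (hp : 2 ≤ p) (u : EuclideanSpace ℝ (Fin d) → ℝ)
    (hu : ContDiff ℝ (⊤ : ℕ∞) u) : Continuous (fun x => |u x| ^ p) :=
  hu.continuous.abs.rpow_const fun x => Or.inr (by linarith)

lemma flowX_integrable {d : ℕ} [NeZero d] (p γ : ℝ) (hp : 2 ≤ p)
    (u : EuclideanSpace ℝ (Fin d) → ℝ) (hu : ContDiff ℝ (⊤ : ℕ∞) u) (hc : HasCompactSupport u)
    (hus : tsupport u ⊆ {x | 0 < x 0}) (i : Fin d) :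
    Integrable (fun x => (x 0) ^ (γ - 1) * flowX p u i x) := by
  refine supp_integrable _ u _ hc hus (flowX_cont p hp u hu i) fun x hx => ?_
  simp [flowX, image_eq_zero_of_notMem_tsupport hx]

lemma g_integrable {d : ℕ} [NeZero d] (p γ : ℝ) (hp : 2 ≤ p)
    (u : EuclideanSpace ℝ (Fin d) → ℝ) (hu : ContDiff ℝ (⊤ : ℕ∞) u) (hc : HasCompactSupport u)
    (hus : tsupport u ⊆ {x | 0 < x 0}) :
    Integrable (fun x => (x 0) ^ (γ - 1) * |u x| ^ p) := by
  refine supp_integrable _ u _ hc hus (g_cont p hp u hu) fun x hx => ?_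
  rw [image_eq_zero_of_notMem_tsupport hx, abs_zero, Real.zero_rpow (by linarith)]

lemma comp_est {d : ℕ} [NeZero d] (p γ : ℝ) (hp : 2 ≤ p) (ε : ℝ) (hε : 0 < ε) (i : Fin d)
    (β : ℝ) (b : EuclideanSpace ℝ (Fin d) → ℝ) (hb : Measurable b) (C : ℝ)
    (hbC : ∀ x, |b x| ≤ C)
    (hosc : ∀ x y : EuclideanSpace ℝ (Fin d), 0 < x 0 → 0 < y 0 →
      dist x y ≤ ε * min (x 0) (y 0) → |b x - b y| ≤ β)
    (u : EuclideanSpace ℝ (Fin d) → ℝ) (hu : ContDiff ℝ (⊤ : ℕ∞) u) (hc : HasCompactSupport u)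
    (hus : tsupport u ⊆ {x | 0 < x 0}) :
    |(∫ x in {x : EuclideanSpace ℝ (Fin d) | 0 < x 0}, (x 0) ^ (γ - 1) * (b x * flowX p u i x)) +
      flowE i * γ * ∫ x in {x : EuclideanSpace ℝ (Fin d) | 0 < x 0},
        (x 0) ^ (γ - 1) * (b x * |u x| ^ p)| ≤
    β * ((∫ x in {x : EuclideanSpace ℝ (Fin d) | 0 < x 0}, (x 0) ^ (γ - 1) * |flowX p u i x|) +
      flowK γ ε i * ∫ x in {x : EuclideanSpace ℝ (Fin d) | 0 < x 0},
        (x 0) ^ (γ - 1) * |(|u x| ^ p)|) := by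
  have hcX := flowX_cont p hp u hu i
  have hcg := g_cont p hp u hu
  have h := flow_est (wmeas d γ) (flowT i) (flowT_cont i).measurable (flowT_id i) (flowT_inv i)
    (flowE i * γ) (wmeas_map γ i) b (fun x => |u x| ^ p) (flowX p u i) hb C hbC
    hcg.measurable hcX.measurable
    (wmeas_integrable γ _ (g_integrable p γ hp u hu hc hus))
    (wmeas_integrable γ _ (flowX_integrable p γ hp u hu hc hus i))
    (fun x s => ?_) (fun x => ?_) (Real.log (1 + ε)) (Real.log_pos (by linarith)) β
    (fun s hs => ?_)
  · simp only [wmeas_integral] at h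
    exact h
  · have hd : HasFDerivAt u (fderiv ℝ u (flowT i s x)) (flowT i s x) :=
      (hu.differentiable (by simp) _).hasFDerivAt
    have h1 := hd.comp_hasDerivAt s (flowT_deriv i s x)
    have h2 := (hasDerivAt_abs_rpow (u (flowT i s x)) (p := p) (by linarith)).comp s h1
    refine h2.congr_deriv ?_
    rw [map_smul, smul_eq_mul, flowX]
    ring
  · exact hcX.comp ((flowT_cont i).comp (by fun_prop : Continuous fun s : ℝ => (s, x)))
  · have hac : wmeas d γ ≪ volume.restrict {x : EuclideanSpace ℝ (Fin d) | 0 < x 0} :=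
      withDensity_absolutelyContinuous _ _
    apply hac.ae_le
    filter_upwards [ae_restrict_mem (measH d)] with x hx
    have hx0 : 0 < x 0 := hx
    refine hosc x _ hx0 ?_ (flowT_dist i ε s hε hs.1 hs.2 x hx0)
    rw [flowT_zero]
    exact mul_pos (Real.exp_pos _) hx0

lemma young_simple (p a c : ℝ) (hp : 2 ≤ p) (ha : 0 ≤ a) (hc : 0 ≤ c) :
    a ^ (p - 2) * a * c ≤ a ^ p + c ^ p := by
  have hsq : ∀ t : ℝ, 0 ≤ t → t ^ (p - 2) * t * t = t ^ p := by
    intro t ht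
    rcases ht.eq_or_lt with rfl | ht
    · rw [Real.zero_rpow (x := p) (by linarith)]; simp
    · have : t ^ p = t ^ (p - 2) * t ^ (2:ℝ) := by rw [← Real.rpow_add ht]; congr 1; ring
      rw [this, Real.rpow_two]; ring
  have h1 := Real.rpow_nonneg ha p
  have h2 := Real.rpow_nonneg hc p
  rcases le_total c a with h | h
  · have : a ^ (p - 2) * a * c ≤ a ^ (p - 2) * a * a := by gcongr
    rw [hsq a ha] at this
    linarith
  · have : a ^ (p - 2) * a * c ≤ c ^ (p - 2) * c * c := by
      have := Real.rpow_le_rpow ha h (by linarith : 0 ≤ p - 2)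
      gcongr
    rw [hsq c hc] at this
    linarith

/-- Lemma 6.1.2: there is `N = N(d,p,θ,ε)` such that for every `β > 0`, every
bounded measurable vector field `ā` on `ℝ^d_+` with `|ā(x) − ā(y)| ≤ β` whenever
`|x − y| ≤ ε (x¹ ∧ y¹)`, and every `u ∈ C_c^∞(ℝ^d_+)`,
`|∫ (x¹)^γ |u|^{p−2} u ā^i D_i u dx + p⁻¹ γ ∫ ā¹ (x¹)^{γ−1} |u|^p dx|
  ≤ N β (‖M⁻¹u‖_{L_{p,θ}} + ‖Du‖_{L_{p,θ}})^p`, where `γ = θ − d − p + 1`. -/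
theorem stmt3 (d : ℕ) [NeZero d] (p θ γ : ℝ) (hp : 2 ≤ p)
    (hθ1 : (d : ℝ) - 1 < θ) (hθ2 : θ < d - 1 + p)
    (hγ : γ = θ - d - p + 1)
    (ε : ℝ) (hε : 0 < ε) :
    ∃ N : ℝ, 0 < N ∧
      ∀ β : ℝ, 0 < β →
      ∀ abar : EuclideanSpace ℝ (Fin d) → Fin d → ℝ,
        Measurable abar →
        (∃ C : ℝ, ∀ x i, |abar x i| ≤ C) →
        (∀ x y : EuclideanSpace ℝ (Fin d), 0 < x 0 → 0 < y 0 →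
          dist x y ≤ ε * min (x 0) (y 0) →
          Real.sqrt (∑ i, (abar x i - abar y i) ^ 2) ≤ β) →
      ∀ u : EuclideanSpace ℝ (Fin d) → ℝ,
        ContDiff ℝ (⊤ : ℕ∞) u → HasCompactSupport u →
        tsupport u ⊆ {x | 0 < x 0} →
        |(∫ x in {x : EuclideanSpace ℝ (Fin d) | 0 < x 0},
            (x 0) ^ γ * |u x| ^ (p - 2) * u x *
              ∑ i, abar x i * fderiv ℝ u x (EuclideanSpace.single i 1)) +
          p⁻¹ * γ *
            ∫ x in {x : EuclideanSpace ℝ (Fin d) | 0 < x 0},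
              abar x 0 * (x 0) ^ (γ - 1) * |u x| ^ p| ≤
          N * β * (wnorm d p θ (fun x => u x / x 0) +
                    wnorm d p θ (fun x => ‖fderiv ℝ u x‖)) ^ p := by
  have hp0 : 0 < p := by linarith
  refine ⟨∑ i : Fin d, (1 + p⁻¹ * flowK γ ε i), ?_, ?_⟩
  · refine Finset.sum_pos (fun i _ => ?_) ⟨0, Finset.mem_univ _⟩
    have := flowK_nonneg γ ε hε i
    positivity
  intro β hβ abar ham hbdd hosc u hu hc hus
  obtain ⟨C, hC⟩ := hbdd
  have hbm : ∀ i, Measurable fun x => abar x i := fun i => (measurable_pi_apply i).comp ham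
  have hoi : ∀ i, ∀ x y : EuclideanSpace ℝ (Fin d), 0 < x 0 → 0 < y 0 →
      dist x y ≤ ε * min (x 0) (y 0) → |abar x i - abar y i| ≤ β := by
    intro i x y hx hy hxy
    refine le_trans ?_ (hosc x y hx hy hxy)
    apply Real.abs_le_sqrt
    exact Finset.single_le_sum (f := fun i => (abar x i - abar y i) ^ 2)
      (fun j _ => sq_nonneg _) (Finset.mem_univ i)
  set H := {x : EuclideanSpace ℝ (Fin d) | 0 < x 0} with hH
  have hest := fun i => comp_est p γ hp ε hε i β (fun x => abar x i) (hbm i) C (fun x => hC x i)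
    (hoi i) u hu hc hus
  have hXi := flowX_integrable p γ hp u hu hc hus
  have hgi := g_integrable p γ hp u hu hc hus
  -- the two norms
  set A := ∫ x in H, (x 0) ^ (γ - 1) * |u x| ^ p with hA
  set B := ∫ x in H, (x 0) ^ (θ - d) * ‖fderiv ℝ u x‖ ^ p with hB
  have hA0 : 0 ≤ A := setIntegral_nonneg (measH d) fun x hx =>
    mul_nonneg (Real.rpow_nonneg (le_of_lt hx) _) (Real.rpow_nonneg (abs_nonneg _) _)
  have hB0 : 0 ≤ B := setIntegral_nonneg (measH d) fun x hx =>
    mul_nonneg (Real.rpow_nonneg (le_of_lt hx) _) (Real.rpow_nonneg (norm_nonneg _) _)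
  have hW1 : wnorm d p θ (fun x => u x / x 0) = A ^ (1 / p) := by
    rw [wnorm, hA]
    congr 1
    refine setIntegral_congr_fun (measH d) fun x hx => ?_
    have hx0 : 0 < x 0 := hx
    simp only
    rw [abs_div, abs_of_pos hx0, Real.div_rpow (abs_nonneg _) hx0.le,
      show γ - 1 = (θ - d) - p by rw [hγ]; ring, Real.rpow_sub hx0 (θ - d) p]
    ring
  have hW2 : wnorm d p θ (fun x => ‖fderiv ℝ u x‖) = B ^ (1 / p) := by
    rw [wnorm, hB]
    simp only [abs_norm]
    rfl
  have hAB : A + B ≤ (A ^ (1 / p) + B ^ (1 / p)) ^ p := by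
    have h := Real.add_rpow_le_rpow_add (Real.rpow_nonneg hA0 (1 / p))
      (Real.rpow_nonneg hB0 (1 / p)) (by linarith : 1 ≤ p)
    rw [← Real.rpow_mul hA0, ← Real.rpow_mul hB0, one_div_mul_cancel hp0.ne', Real.rpow_one,
      Real.rpow_one] at h
    exact h
  have hDi : Integrable (fun x : EuclideanSpace ℝ (Fin d) =>
      (x 0) ^ (θ - d) * ‖fderiv ℝ u x‖ ^ p) := by
    refine supp_integrable _ u _ hc hus ?_ fun x hx => ?_
    · exact (hu.continuous_fderiv (by simp)).norm.rpow_const fun x => Or.inr hp0.le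
    · have : fderiv ℝ u x = 0 := by
        by_contra h
        exact hx (support_fderiv_subset ℝ h)
      rw [this, norm_zero, Real.zero_rpow hp0.ne']
  have hXb : ∀ i, ∫ x in H, (x 0) ^ (γ - 1) * |flowX p u i x| ≤ p * (A + B) := by
    intro i
    rw [hA, hB, ← integral_add hgi.integrableOn hDi.integrableOn, ← integral_const_mul]
    have hXabs : IntegrableOn (fun x => (x 0) ^ (γ - 1) * |flowX p u i x|) H := by
      refine (hXi i).abs.integrableOn.congr_fun (fun x hx => ?_) (measH d)
      have hx0 : 0 < x 0 := hx
      simp only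
      rw [abs_mul, abs_of_nonneg (Real.rpow_nonneg hx0.le _)]
    refine setIntegral_mono_on hXabs
      ((hgi.integrableOn.add hDi.integrableOn).const_mul p) (measH d) fun x hx => ?_
    have hx0 : 0 < x 0 := hx
    have hDe : |fderiv ℝ u x (EuclideanSpace.single i 1)| ≤ ‖fderiv ℝ u x‖ := by
      have := (fderiv ℝ u x).le_opNorm (EuclideanSpace.single i 1)
      simpa using this
    have hy := young_simple p |u x| (x 0 * ‖fderiv ℝ u x‖) hp (abs_nonneg _)
      (mul_nonneg hx0.le (norm_nonneg _))
    rw [Real.mul_rpow hx0.le (norm_nonneg _)] at hy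
    have hpow : (x 0) ^ (θ - d) = (x 0) ^ (γ - 1) * (x 0) ^ p := by
      rw [← Real.rpow_add hx0]; congr 1; rw [hγ]; ring
    have hX : |flowX p u i x| ≤ p * (|u x| ^ (p - 2) * |u x| * (x 0 * ‖fderiv ℝ u x‖)) := by
      rw [flowX, abs_mul, abs_mul, abs_mul, abs_mul, abs_of_pos hx0, abs_of_pos hp0,
        abs_of_nonneg (Real.rpow_nonneg (abs_nonneg (u x)) _)]
      have h0 := Real.rpow_nonneg (abs_nonneg (u x)) (p - 2)
      calc _ = p * (|u x| ^ (p - 2) * |u x| *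
            (x 0 * |fderiv ℝ u x (EuclideanSpace.single i 1)|)) := by ring
        _ ≤ _ := by gcongr
    have hw := Real.rpow_nonneg hx0.le (γ - 1)
    calc (x 0) ^ (γ - 1) * |flowX p u i x|
        ≤ (x 0) ^ (γ - 1) * (p * (|u x| ^ p + (x 0) ^ p * ‖fderiv ℝ u x‖ ^ p)) := by
          refine mul_le_mul_of_nonneg_left (hX.trans ?_) hw
          exact mul_le_mul_of_nonneg_left hy hp0.le
      _ = _ := by rw [hpow]; ring
  -- decomposition
  have hI1 : ∫ x in H, (x 0) ^ γ * |u x| ^ (p - 2) * u x *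
        ∑ i, abar x i * fderiv ℝ u x (EuclideanSpace.single i 1) =
      ∑ i, p⁻¹ * ∫ x in H, (x 0) ^ (γ - 1) * (abar x i * flowX p u i x) := by
    simp_rw [← integral_const_mul]
    rw [← integral_finsetSum]
    · refine setIntegral_congr_fun (measH d) fun x hx => ?_
      have hx0 : 0 < x 0 := hx
      rw [Finset.mul_sum]
      refine Finset.sum_congr rfl fun i _ => ?_
      have hpow : (x 0) ^ γ = (x 0) ^ (γ - 1) * x 0 := by
        rw [← Real.rpow_add_one hx0.ne']; congr 1; ring
      rw [hpow, flowX]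
      field_simp
    · intro i _
      refine Integrable.const_mul ?_ _
      have : Integrable (fun x => abar x i * ((x 0) ^ (γ - 1) * flowX p u i x))
          (volume.restrict H) :=
        (hXi i).integrableOn.bdd_mul (c := C) (hbm i).aestronglyMeasurable
          (Filter.Eventually.of_forall fun x => hC x i)
      refine this.congr (Filter.Eventually.of_forall fun x => ?_)
      simp only
      ring
  have hI2 : p⁻¹ * γ * ∫ x in H, abar x 0 * (x 0) ^ (γ - 1) * |u x| ^ p =
      ∑ i, p⁻¹ * (flowE i * γ * ∫ x in H, (x 0) ^ (γ - 1) * (abar x i * |u x| ^ p)) := by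
    rw [Finset.sum_eq_single (0 : Fin d)]
    · simp only [flowE, if_true, one_mul]
      rw [mul_assoc]
      congr 3
      funext x
      ring
    · intro i _ hi
      simp [flowE, hi]
    · simp
  rw [hI1, hI2, ← Finset.sum_add_distrib, hW1, hW2]
  refine (Finset.abs_sum_le_sum_abs _ _).trans ?_
  rw [Finset.sum_mul, Finset.sum_mul]
  refine Finset.sum_le_sum fun i _ => ?_
  rw [← mul_add, abs_mul, abs_of_pos (inv_pos.2 hp0)]
  have hK := flowK_nonneg γ ε hε i
  have habs : ∫ x in H, (x 0) ^ (γ - 1) * |(|u x| ^ p)| = A := by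
    rw [hA]
    congr 1
    funext x
    rw [abs_of_nonneg (Real.rpow_nonneg (abs_nonneg _) _)]
  have he := hest i
  rw [habs] at he
  calc _ ≤ p⁻¹ * (β * ((∫ x in H, (x 0) ^ (γ - 1) * |flowX p u i x|) + flowK γ ε i * A)) :=
        mul_le_mul_of_nonneg_left he (inv_pos.2 hp0).le
    _ ≤ p⁻¹ * (β * (p * (A + B) + flowK γ ε i * (A + B))) := by
        have := hXb i
        have hAB' : A ≤ A + B := by linarith
        gcongr
    _ = (1 + p⁻¹ * flowK γ ε i) * β * (A + B) := by field_simp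
    _ ≤ _ := by gcongr
end

section
/- (Key deterministic estimate from the proof of Theorem 5.30.1) Let d ≥ 1 be an integer, p ∈ [2,∞), θ ∈ (d−1, d−1+p), γ = θ − d − p + 1 (so γ < 0), and δ, δ̄ ∈ (0,∞). Let a = (a^{ij}) and b = (b^{ij}) be bounded measurable d×d-matrix-valued functions on ℝ^d_+ such that for all x ∈ ℝ^d_+ and ξ ∈ ℝ^d: δ̄ (Σ_i a^{i1}(x) ξ^i)² ≤ b^{ij}(x) ξ^i ξ^j and b^{ij}(x) ξ^i ξ^j ≥ δ |ξ|². Then for every u ∈ C_c^∞(ℝ^d_+), | ∫_{ℝ^d_+} (x¹)^γ |u|^{p−2} u a^{i1} D_i u dx | ≤ δ̄^{−1/2} δ^{−1/2} p |γ|^{−1} ∫_{ℝ^d_+} (x¹)^{γ+1} |u|^{p−2} b^{ij} (D_i u)(D_j u) dx. -/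
open MeasureTheory Finset

lemma aux_cont {d : ℕ} [NeZero d] (s : ℝ) (φ : EuclideanSpace ℝ (Fin d) → ℝ)
    (hφ : Continuous φ) (h' : tsupport φ ⊆ {x | 0 < x 0}) :
    Continuous fun x => (x 0) ^ s * φ x := by
  apply continuous_of_tsupport
  intro x hx
  have hx' : 0 < x 0 := h' (tsupport_mul_subset_right hx)
  have h0 : ContinuousAt (fun x : EuclideanSpace ℝ (Fin d) => x 0) x := by fun_prop
  exact (h0.rpow_const (Or.inl hx'.ne')).mul hφ.continuousAt

lemma aux_int {d : ℕ} [NeZero d] (s : ℝ) (φ : EuclideanSpace ℝ (Fin d) → ℝ)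
    (hφ : Continuous φ) (hc : HasCompactSupport φ) (h' : tsupport φ ⊆ {x | 0 < x 0}) :
    Integrable fun x => (x 0) ^ s * φ x :=
  (aux_cont s φ hφ h').integrable_of_hasCompactSupport hc.mul_left

lemma aux_int_mul {d : ℕ} [NeZero d] (s : ℝ) (φ c : EuclideanSpace ℝ (Fin d) → ℝ)
    (hφ : Continuous φ) (hc : HasCompactSupport φ) (h' : tsupport φ ⊆ {x | 0 < x 0})
    (hm : Measurable c) (C : ℝ) (hC : ∀ x, |c x| ≤ C) :
    Integrable fun x => ((x 0) ^ s * φ x) * c x := by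
  refine (aux_int s φ hφ hc h').mul_bdd (c := C) hm.aestronglyMeasurable ?_
  exact Filter.Eventually.of_forall hC

lemma aux_hardy {d : ℕ} [NeZero d] (p γ : ℝ) (hp : 2 ≤ p) (hγ : γ < 0)
    (u : EuclideanSpace ℝ (Fin d) → ℝ)
    (hu : ContDiff ℝ (⊤ : ℕ∞) u) (husupp : HasCompactSupport u)
    (husupp' : tsupport u ⊆ {x | 0 < x 0}) :
    γ ^ 2 * ∫ x, (x 0) ^ (γ - 1) * |u x| ^ p ≤
      p ^ 2 * ∫ x, (x 0) ^ (γ + 1) *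
        (|u x| ^ (p - 2) * fderiv ℝ u x (EuclideanSpace.single 0 1) ^ 2) := by
  have huc := hu.continuous
  have hdc : Continuous fun x => fderiv ℝ u x (EuclideanSpace.single 0 1) :=
    (hu.continuous_fderiv (by simp)).clm_apply continuous_const
  have hsub : ∀ f : EuclideanSpace ℝ (Fin d) → ℝ, (∀ x, u x = 0 → f x = 0) →
      tsupport f ⊆ tsupport u := fun f hf =>
    closure_mono (fun x hx h0 => hx (hf x h0))
  have hp0 : p ≠ 0 := by linarith
  have hUc : Continuous fun x => |u x| ^ p := huc.abs.rpow_const (fun _ => Or.inr (by linarith))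
  have hU2c : Continuous fun x => |u x| ^ (p-2) :=
    huc.abs.rpow_const (fun _ => Or.inr (by linarith))
  have hUs : tsupport (fun x => |u x| ^ p) ⊆ tsupport u :=
    hsub _ (fun x h => by simp [h, hp0])
  have hVs : tsupport (fun x => |u x| ^ (p-2) * u x * fderiv ℝ u x (EuclideanSpace.single 0 1))
      ⊆ tsupport u := hsub _ (fun x h => by simp [h])
  have hKs : tsupport (fun x => |u x| ^ (p-2) * fderiv ℝ u x (EuclideanSpace.single 0 1) ^ 2)
      ⊆ tsupport u := by
    refine closure_minimal ?_ (isClosed_tsupport u)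
    intro x hx
    by_contra h
    apply hx
    have : fderiv ℝ u x = 0 := by
      by_contra h2
      exact h (support_fderiv_subset ℝ h2)
    simp [this]
  have cs : ∀ f : EuclideanSpace ℝ (Fin d) → ℝ, tsupport f ⊆ tsupport u → HasCompactSupport f :=
    fun f hf => husupp.of_isClosed_subset (isClosed_tsupport f) hf
  have hF : Integrable fun x : EuclideanSpace ℝ (Fin d) => (x 0) ^ γ * |u x| ^ p :=
    aux_int γ _ hUc (cs _ hUs) (hUs.trans husupp')
  have hH : Integrable fun x : EuclideanSpace ℝ (Fin d) => (x 0) ^ (γ-1) * |u x| ^ p :=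
    aux_int _ _ hUc (cs _ hUs) (hUs.trans husupp')
  have hV : Integrable fun x : EuclideanSpace ℝ (Fin d) => (x 0) ^ γ *
      (|u x| ^ (p-2) * u x * fderiv ℝ u x (EuclideanSpace.single 0 1)) :=
    aux_int _ _ ((hU2c.mul huc).mul hdc) (cs _ hVs) (hVs.trans husupp')
  have hK : Integrable fun x : EuclideanSpace ℝ (Fin d) => (x 0) ^ (γ+1) *
      (|u x| ^ (p-2) * fderiv ℝ u x (EuclideanSpace.single 0 1) ^ 2) :=
    aux_int _ _ (hU2c.mul (hdc.pow 2)) (cs _ hKs) (hKs.trans husupp')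
  have hd : ∀ x, ∃ L : EuclideanSpace ℝ (Fin d) →L[ℝ] ℝ,
      HasFDerivAt (fun x : EuclideanSpace ℝ (Fin d) => (x 0) ^ γ * |u x| ^ p) L x ∧
      L (EuclideanSpace.single 0 1) = γ * ((x 0) ^ (γ-1) * |u x| ^ p) +
        p * ((x 0) ^ γ *
      (|u x| ^ (p-2) * u x * fderiv ℝ u x (EuclideanSpace.single 0 1))) := by
    intro x
    by_cases hx : x ∈ tsupport u
    · have hx0 : 0 < x 0 := husupp' hx
      have h1 : HasFDerivAt (fun x : EuclideanSpace ℝ (Fin d) => x 0)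
        (EuclideanSpace.proj (𝕜 := ℝ) (0 : Fin d)) x :=
        (EuclideanSpace.proj (𝕜 := ℝ) (0 : Fin d)).hasFDerivAt
      have h2 := h1.rpow_const (p := γ) (Or.inl hx0.ne')
      have h3 := (hasDerivAt_abs_rpow (u x) (p := p) (by linarith)).comp_hasFDerivAt x
        ((hu.differentiable (by simp)) x).hasFDerivAt
      refine ⟨_, h2.mul h3, ?_⟩
      simp
      ring
    · have h0 : u =ᶠ[nhds x] 0 := notMem_tsupport_iff_eventuallyEq.mp hx
      refine ⟨0, ?_, ?_⟩
      · refine (hasFDerivAt_const (0:ℝ) x).congr_of_eventuallyEq ?_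
        filter_upwards [h0] with y hy
        simp [hy, hp0]
      · have := h0.self_of_nhds
        simp at this
        simp [this, hp0]
  choose L hL hL1 using hd
  have hfd : ∀ x, fderiv ℝ (fun x : EuclideanSpace ℝ (Fin d) => (x 0) ^ γ * |u x| ^ p) x = L x :=
    fun x => (hL x).fderiv
  have key := integral_mul_fderiv_eq_neg_fderiv_mul_of_integrable (μ := volume) (𝕜 := ℝ)
    (f := fun x : EuclideanSpace ℝ (Fin d) => (x 0) ^ γ * |u x| ^ p) (g := fun _ => (1:ℝ))
    (v := EuclideanSpace.single 0 1)
    (by simp only [hfd, hL1, mul_one]; exact (hH.const_mul γ).add (hV.const_mul p))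
    (by simp) (by simpa using hF) (fun x _ => (hL x).differentiableAt) (by fun_prop)
  simp only [hfd, hL1, mul_one] at key
  rw [integral_add (hH.const_mul γ) (hV.const_mul p), integral_const_mul, integral_const_mul] at key
  simp at key
  set H := ∫ x : EuclideanSpace ℝ (Fin d), (x 0) ^ (γ-1) * |u x| ^ p with hHdef
  set V := ∫ x : EuclideanSpace ℝ (Fin d), (x 0) ^ γ *
      (|u x| ^ (p-2) * u x * fderiv ℝ u x (EuclideanSpace.single 0 1)) with hVdef
  set K := ∫ x : EuclideanSpace ℝ (Fin d), (x 0) ^ (γ+1) *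
      (|u x| ^ (p-2) * fderiv ℝ u x (EuclideanSpace.single 0 1) ^ 2) with hKdef
  have hyoung : 2 * (-γ) * p * V ≤ γ ^ 2 * H + p ^ 2 * K := by
    rw [hHdef, hVdef, hKdef, ← integral_const_mul, ← integral_const_mul, ← integral_const_mul,
      ← integral_add (hH.const_mul _) (hK.const_mul _)]
    refine integral_mono (hV.const_mul _) ((hH.const_mul _).add (hK.const_mul _)) ?_
    intro x
    by_cases hx : x ∈ tsupport u
    · have hx0 : 0 < x 0 := husupp' hx
      have e1 : (x 0) ^ γ = (x 0) ^ (γ-1) * x 0 := by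
        rw [← Real.rpow_add_one hx0.ne']; ring_nf
      have e2 : (x 0) ^ (γ+1) = (x 0) ^ (γ-1) * x 0 ^ 2 := by
        rw [Real.rpow_add_one hx0.ne', e1]; ring
      have e3 : |u x| ^ p = |u x| ^ (p-2) * u x ^ 2 := by
        rw [← sq_abs (u x), ← Real.rpow_natCast, ← Real.rpow_add' (abs_nonneg _) (by simpa using hp0)]
        simp
      simp only
      rw [e1, e2, e3]
      have : 0 ≤ (x 0) ^ (γ-1) * |u x| ^ (p-2) * (γ * u x + p * x 0 *
        fderiv ℝ u x (EuclideanSpace.single 0 1)) ^ 2 := by positivity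
      nlinarith [this]
    · have h1 : u x = 0 := image_eq_zero_of_notMem_tsupport hx
      have h2 : fderiv ℝ u x = 0 := by
        by_contra h2
        exact hx (support_fderiv_subset ℝ h2)
      simp [h1, h2, hp0]
  nlinarith

theorem stmt13 (d : ℕ) [NeZero d] (p θ γ δ δbar : ℝ) (hp : 2 ≤ p)
    (hθ1 : (d : ℝ) - 1 < θ) (hθ2 : θ < d - 1 + p)
    (hγ : γ = θ - d - p + 1) (hδ : 0 < δ) (hδbar : 0 < δbar)
    (a b : EuclideanSpace ℝ (Fin d) → Matrix (Fin d) (Fin d) ℝ)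
    (hameas : ∀ i j, Measurable fun x => a x i j)
    (hbmeas : ∀ i j, Measurable fun x => b x i j)
    (habd : ∃ C : ℝ, ∀ x i j, |a x i j| ≤ C ∧ |b x i j| ≤ C)
    (hcontrol : ∀ x : EuclideanSpace ℝ (Fin d), 0 < x 0 → ∀ ξ : Fin d → ℝ,
      δbar * (∑ i, a x i 0 * ξ i) ^ 2 ≤ ∑ i, ∑ j, b x i j * ξ i * ξ j)
    (hell : ∀ x : EuclideanSpace ℝ (Fin d), 0 < x 0 → ∀ ξ : Fin d → ℝ,
      δ * ∑ i, (ξ i) ^ 2 ≤ ∑ i, ∑ j, b x i j * ξ i * ξ j)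
    (u : EuclideanSpace ℝ (Fin d) → ℝ)
    (hu : ContDiff ℝ (⊤ : ℕ∞) u) (husupp : HasCompactSupport u)
    (husupp' : tsupport u ⊆ {x | 0 < x 0}) :
    |∫ x in {x : EuclideanSpace ℝ (Fin d) | 0 < x 0},
        (x 0) ^ γ * |u x| ^ (p - 2) * u x *
          ∑ i, a x i 0 * fderiv ℝ u x (EuclideanSpace.single i 1)| ≤
      δbar ^ (-(1 : ℝ) / 2) * δ ^ (-(1 : ℝ) / 2) * p * |γ|⁻¹ *
        ∫ x in {x : EuclideanSpace ℝ (Fin d) | 0 < x 0},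
          (x 0) ^ (γ + 1) * |u x| ^ (p - 2) *
            ∑ i, ∑ j, b x i j * fderiv ℝ u x (EuclideanSpace.single i 1) *
              fderiv ℝ u x (EuclideanSpace.single j 1) := by
  have hγ0 : γ < 0 := by linarith
  have hp0 : p ≠ 0 := by linarith
  have hpp : 0 < p := by linarith
  obtain ⟨C, hC⟩ := habd
  have hz : ∀ x, x ∉ tsupport u → u x = 0 ∧ fderiv ℝ u x = 0 := by
    intro x hx
    refine ⟨image_eq_zero_of_notMem_tsupport hx, ?_⟩
    by_contra h2
    exact hx (support_fderiv_subset ℝ h2)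
  rw [setIntegral_eq_integral_of_forall_compl_eq_zero
    (fun x hx => by simp [hz x (fun h => hx (husupp' h))]),
    setIntegral_eq_integral_of_forall_compl_eq_zero
    (fun x hx => by simp [hz x (fun h => hx (husupp' h))])]
  have hardy := aux_hardy p γ hp hγ0 u hu husupp husupp'
  have huc := hu.continuous
  have hdc : ∀ i, Continuous fun x => fderiv ℝ u x (EuclideanSpace.single i 1) := fun i =>
    (hu.continuous_fderiv (by simp)).clm_apply continuous_const
  have hUc : Continuous fun x => |u x| ^ p := huc.abs.rpow_const (fun _ => Or.inr (by linarith))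
  have hU2c : Continuous fun x => |u x| ^ (p-2) :=
    huc.abs.rpow_const (fun _ => Or.inr (by linarith))
  have hsub : ∀ f : EuclideanSpace ℝ (Fin d) → ℝ, (∀ x, u x = 0 → fderiv ℝ u x = 0 → f x = 0) →
      tsupport f ⊆ tsupport u := by
    intro f hf
    refine closure_minimal ?_ (isClosed_tsupport u)
    intro x hx
    by_contra h
    exact hx (hf x (hz x h).1 (hz x h).2)
  have cs : ∀ f : EuclideanSpace ℝ (Fin d) → ℝ, tsupport f ⊆ tsupport u → HasCompactSupport f :=
    fun f hf => husupp.of_isClosed_subset (isClosed_tsupport f) hf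
  have hUs : tsupport (fun x => |u x| ^ p) ⊆ tsupport u :=
    hsub _ (fun x h _ => by simp [h, hp0])
  have hH : Integrable fun x : EuclideanSpace ℝ (Fin d) => (x 0) ^ (γ-1) * |u x| ^ p :=
    aux_int _ _ hUc (cs _ hUs) (hUs.trans husupp')
  have hKs : tsupport (fun x => |u x| ^ (p-2) * fderiv ℝ u x (EuclideanSpace.single 0 1) ^ 2)
      ⊆ tsupport u := hsub _ (fun x _ h => by simp [h])
  have hK : Integrable fun x : EuclideanSpace ℝ (Fin d) => (x 0) ^ (γ+1) *
      (|u x| ^ (p-2) * fderiv ℝ u x (EuclideanSpace.single 0 1) ^ 2) :=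
    aux_int _ _ (hU2c.mul ((hdc 0).pow 2)) (cs _ hKs) (hKs.trans husupp')
  have hJ : Integrable fun x : EuclideanSpace ℝ (Fin d) => (x 0) ^ (γ + 1) * |u x| ^ (p - 2) *
            ∑ i, ∑ j, b x i j * fderiv ℝ u x (EuclideanSpace.single i 1) *
              fderiv ℝ u x (EuclideanSpace.single j 1) := by
    simp only [Finset.mul_sum]
    refine integrable_finsetSum _ fun i _ => integrable_finsetSum _ fun j _ => ?_
    have hs : tsupport (fun x => |u x| ^ (p-2) * fderiv ℝ u x (EuclideanSpace.single i 1) *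
        fderiv ℝ u x (EuclideanSpace.single j 1)) ⊆ tsupport u := hsub _ (fun x _ h => by simp [h])
    refine (aux_int_mul (γ+1) _ (fun x => b x i j) ((hU2c.mul (hdc i)).mul (hdc j)) (cs _ hs)
      (hs.trans husupp') (hbmeas i j) C (fun x => (hC x i j).2)).congr ?_
    exact Filter.Eventually.of_forall fun x => by simp only [Pi.mul_apply]; ring
  set H := ∫ x : EuclideanSpace ℝ (Fin d), (x 0) ^ (γ-1) * |u x| ^ p with hHdef
  set K := ∫ x : EuclideanSpace ℝ (Fin d), (x 0) ^ (γ+1) *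
      (|u x| ^ (p-2) * fderiv ℝ u x (EuclideanSpace.single 0 1) ^ 2) with hKdef
  set J := ∫ x : EuclideanSpace ℝ (Fin d), (x 0) ^ (γ + 1) * |u x| ^ (p - 2) *
            ∑ i, ∑ j, b x i j * fderiv ℝ u x (EuclideanSpace.single i 1) *
              fderiv ℝ u x (EuclideanSpace.single j 1) with hJdef
  have hKJ : δ * K ≤ J := by
    rw [hKdef, hJdef, ← integral_const_mul]
    refine integral_mono (hK.const_mul _) hJ ?_
    intro x
    by_cases hx : x ∈ tsupport u
    · have hx0 : 0 < x 0 := husupp' hx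
      have h1 := hell x hx0 (fun i => fderiv ℝ u x (EuclideanSpace.single i 1))
      have h2 : fderiv ℝ u x (EuclideanSpace.single 0 1) ^ 2 ≤
          ∑ i, fderiv ℝ u x (EuclideanSpace.single i 1) ^ 2 :=
        Finset.single_le_sum (f := fun i => fderiv ℝ u x (EuclideanSpace.single i 1) ^ 2)
          (fun i _ => sq_nonneg _) (Finset.mem_univ 0)
      have h3 := (mul_le_mul_of_nonneg_left h2 hδ.le).trans h1
      have h4 : 0 ≤ (x 0) ^ (γ+1) * |u x| ^ (p-2) := by positivity
      have h5 := mul_le_mul_of_nonneg_left h3 h4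
      simp only
      linarith
    · simp [hz x hx]
  -- constants
  obtain ⟨sb, hsb, rfl⟩ : ∃ s : ℝ, 0 < s ∧ δbar = s ^ 2 :=
    ⟨√δbar, Real.sqrt_pos.2 hδbar, (Real.sq_sqrt hδbar.le).symm⟩
  obtain ⟨s, hs, rfl⟩ : ∃ s : ℝ, 0 < s ∧ δ = s ^ 2 :=
    ⟨√δ, Real.sqrt_pos.2 hδ, (Real.sq_sqrt hδ.le).symm⟩
  have hpow : ∀ t : ℝ, 0 < t → (t ^ 2) ^ (-(1:ℝ)/2) = t⁻¹ := by
    intro t ht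
    rw [← Real.rpow_natCast, ← Real.rpow_mul ht.le, ← Real.rpow_neg_one]
    norm_num
  rw [hpow _ hsb, hpow _ hs, abs_of_neg hγ0]
  obtain ⟨g, rfl⟩ : ∃ g, γ = -g := ⟨-γ, by ring⟩
  have hg : 0 < g := by linarith
  rw [neg_neg]
  -- pointwise bound
  have hb : |∫ x : EuclideanSpace ℝ (Fin d), (x 0) ^ (-g) * |u x| ^ (p - 2) * u x *
          ∑ i, a x i 0 * fderiv ℝ u x (EuclideanSpace.single i 1)| ≤
      (sb⁻¹ * (g * s / p) / 2) * H + (sb⁻¹ * (p / (g * s)) / 2) * J := by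
    rw [hHdef, hJdef, ← integral_const_mul, ← integral_const_mul,
      ← integral_add (hH.const_mul _) (hJ.const_mul _), ← Real.norm_eq_abs]
    refine norm_integral_le_of_norm_le ((hH.const_mul _).add (hJ.const_mul _)) ?_
    refine Filter.Eventually.of_forall fun x => ?_
    rw [Real.norm_eq_abs]
    by_cases hx : x ∈ tsupport u
    · have hx0 : 0 < x 0 := husupp' hx
      have e1 : (x 0) ^ (-g) = (x 0) ^ (-g-1) * x 0 := by
        rw [← Real.rpow_add_one hx0.ne']; ring_nf
      have e2 : (x 0) ^ (-g+1) = (x 0) ^ (-g-1) * x 0 ^ 2 := by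
        rw [Real.rpow_add_one hx0.ne', e1]; ring
      have e3 : |u x| ^ p = |u x| ^ (p-2) * |u x| ^ 2 := by
        rw [← Real.rpow_natCast, ← Real.rpow_add' (abs_nonneg _) (by simpa using hp0)]
        simp
      have h1 := hcontrol x hx0 (fun i => fderiv ℝ u x (EuclideanSpace.single i 1))
      rw [e1, e2, e3]
      generalize (∑ i, a x i 0 * fderiv ℝ u x (EuclideanSpace.single i 1)) = A at *
      generalize (∑ i, ∑ j, b x i j * fderiv ℝ u x (EuclideanSpace.single i 1) *
              fderiv ℝ u x (EuclideanSpace.single j 1)) = B at *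
      have hW : 0 ≤ (x 0) ^ (-g-1) := by positivity
      have hU : 0 ≤ |u x| ^ (p-2) := by positivity
      generalize (x 0) ^ (-g-1) = W at *
      generalize |u x| ^ (p-2) = U at *
      rw [abs_mul, abs_mul, abs_mul, abs_mul, abs_of_nonneg hW, abs_of_nonneg hU, abs_of_pos hx0]
      rw [← sq_abs A] at h1
      generalize |u x| = v at *
      generalize |A| = α at *
      generalize x 0 = w at *
      have h2 : v * w * α ≤ (sb⁻¹ * (g * s / p) / 2) * v ^ 2 +
          (sb⁻¹ * (p / (g * s)) / 2) * (w ^ 2 * B) := by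
        have h3 : (sb⁻¹ * (p / (g * s)) / 2) * (w ^ 2 * (sb ^ 2 * α ^ 2)) ≤
          (sb⁻¹ * (p / (g * s)) / 2) * (w ^ 2 * B) := by gcongr
        refine le_trans ?_ (add_le_add_right h3 _)
        have h4 : (sb⁻¹ * (g * s / p) / 2) * v ^ 2 +
          (sb⁻¹ * (p / (g * s)) / 2) * (w ^ 2 * (sb ^ 2 * α ^ 2)) - v * w * α =
          (g * s * v - p * sb * w * α) ^ 2 / (2 * sb * p * g * s) := by
          field_simp
          ring
        have h5 : 0 ≤ (g * s * v - p * sb * w * α) ^ 2 / (2 * sb * p * g * s) := by positivity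
        linarith
      have := mul_le_mul_of_nonneg_left h2 (mul_nonneg hW hU)
      linarith
    · simp [hz x hx, hp0]
  refine hb.trans ?_
  have hHJ : H ≤ p ^ 2 / (g ^ 2 * s ^ 2) * J := by
    rw [div_mul_eq_mul_div, le_div_iff₀ (by positivity)]
    nlinarith [mul_le_mul_of_nonneg_left hKJ (sq_nonneg p),
      mul_le_mul_of_nonneg_left hardy (sq_nonneg s)]
  have h6 := mul_le_mul_of_nonneg_left hHJ (show 0 ≤ sb⁻¹ * (g * s / p) / 2 by positivity)
  refine (add_le_add_left h6 _).trans (le_of_eq ?_)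
  field_simp
  ring
end
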